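/- Assume the open set condition: J ⊆ ℝ^d is compact with J = cl(int J), ⋃_{j=1}^N S_j(J) ⊆ J, and S_j(int J) ∩ S_l(int J) = ∅ for j ≠ l. Let w = w₁…w_n ∈ {1,…,N}^n be a finite word, S_w := S_{w₁}∘⋯∘S_{w_n}, r_w := r_{w₁}⋯r_{w_n}, F_w := S_w(F), J_w := S_w(J). Let a ≥ 1, x ∈ F_w, and ε > 0 with 2aε < d(x, ℝ^d ∖ J_w). Then λ_d(F(ε) ∩ B(x, aε)) = r_w^d · λ_d(F(r_w^{−1}ε) ∩ B(S_w^{−1}(x), a r_w^{−1} ε)), where λ_d is Lebesgue measure on ℝ^d. -/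

import Mathlib

open MeasureTheory Metric Filter Set
open scoped ENNReal Topology

open Topology
open scoped NNReal

/-!
Under the open set condition `F` meets `S_w(U)` only in `F_w`: for `j ≠ i` a point of `F_j` is a
limit of points of `S_j(U)`, so it avoids the open set `S_i(U)`, which is disjoint from `S_j(U)`.
If `B(x, ρ + ε) ⊆ S_w(U)`, every point of `F` within `ε` of `B(x, ρ)` therefore belongs to `F_w`,
so `F(ε) ∩ B(x, ρ) = F_w(ε) ∩ B(x, ρ)`. This is the image under `S_w` of
`F(r_w⁻¹ε) ∩ B(S_w⁻¹(x), r_w⁻¹ρ)`, and a similarity of ratio `c` multiplies volumes by `c ^ d`.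
-/

/-- The map `f` is a similarity of ratio `c > 0`. The ratio is an explicit parameter, in contrast to
`Dilation.ratio`, which is `1` by convention on spaces with at most one point. Surjectivity is not
part of the definition. -/
structure IsSimilarity {X Y : Type*} [PseudoMetricSpace X] [PseudoMetricSpace Y]
    (c : ℝ) (f : X → Y) : Prop where
  ratio_pos : 0 < c
  dist_eq : ∀ x y, dist (f x) (f y) = c * dist x y

namespace IsSimilarity

section PseudoMetric

variable {X Y Z : Type*} [PseudoMetricSpace X] [PseudoMetricSpace Y] [PseudoMetricSpace Z]
  {c c' : ℝ} {f : X → Y} {g : Y → Z}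

protected theorem id : IsSimilarity 1 (id : X → X) where
  ratio_pos := one_pos
  dist_eq _ _ := (one_mul _).symm

theorem comp (hg : IsSimilarity c' g) (hf : IsSimilarity c f) :
    IsSimilarity (c' * c) (g ∘ f) where
  ratio_pos := mul_pos hg.ratio_pos hf.ratio_pos
  dist_eq x y := by rw [Function.comp_apply, Function.comp_apply, hg.dist_eq, hf.dist_eq, mul_assoc]

theorem lipschitzWith (hf : IsSimilarity c f) : LipschitzWith c.toNNReal f :=
  .of_dist_le' fun x y ↦ (hf.dist_eq x y).le

theorem antilipschitzWith (hf : IsSimilarity c f) : AntilipschitzWith c.toNNReal⁻¹ f :=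
  .of_le_mul_dist fun x y ↦ by
    rw [NNReal.coe_inv, Real.coe_toNNReal c hf.ratio_pos.le, hf.dist_eq,
      inv_mul_cancel_left₀ hf.ratio_pos.ne']

theorem infEDist_image (hf : IsSimilarity c f) (x : X) (A : Set X) :
    infEDist (f x) (f '' A) = ENNReal.ofReal c * infEDist x A := by
  have edist_eq (y : X) : edist (f x) (f y) = ENNReal.ofReal c * edist x y := by
    rw [edist_dist, hf.dist_eq, ENNReal.ofReal_mul hf.ratio_pos.le, ← edist_dist]
  simp only [infEDist, iInf_image, edist_eq]
  simp only [ENNReal.mul_iInf_of_ne (ENNReal.ofReal_pos.2 hf.ratio_pos).ne' ENNReal.ofReal_ne_top]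

theorem preimage_cthickening_image (hf : IsSimilarity c f) (δ : ℝ) (A : Set X) :
    f ⁻¹' cthickening δ (f '' A) = cthickening (c⁻¹ * δ) A := by
  ext x
  rw [mem_preimage, mem_cthickening_iff, mem_cthickening_iff, hf.infEDist_image,
    ENNReal.ofReal_mul (inv_nonneg.2 hf.ratio_pos.le), ENNReal.ofReal_inv_of_pos hf.ratio_pos,
    ENNReal.mul_le_iff_le_inv (ENNReal.ofReal_pos.2 hf.ratio_pos).ne' ENNReal.ofReal_ne_top]

theorem preimage_closedBall (hf : IsSimilarity c f) (x : X) (ρ : ℝ) :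
    f ⁻¹' closedBall (f x) ρ = closedBall x (c⁻¹ * ρ) := by
  ext z
  rw [mem_preimage, mem_closedBall, mem_closedBall, hf.dist_eq, le_inv_mul_iff₀ hf.ratio_pos]

end PseudoMetric

section Metric

variable {X : Type*} [MetricSpace X] {c : ℝ}

theorem isHomeomorph {Y : Type*} [PseudoMetricSpace Y] {f : X → Y} (hf : IsSimilarity c f)
    (hsurj : f.Surjective) : IsHomeomorph f :=
  isHomeomorph_iff_isEmbedding_surjective.2
    ⟨(hf.antilipschitzWith.isUniformEmbedding
      hf.lipschitzWith.uniformContinuous).isEmbedding, hsurj⟩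

theorem hausdorffMeasure_image {Y : Type*} [MetricSpace Y] [MeasurableSpace X] [BorelSpace X]
    [MeasurableSpace Y] [BorelSpace Y] {f : X → Y} (hf : IsSimilarity c f) {d : ℝ} (hd : 0 ≤ d)
    (A : Set X) :
    μH[d] (f '' A) = ENNReal.ofReal c ^ d * μH[d] A := by
  refine le_antisymm (hf.lipschitzWith.hausdorffMeasure_image_le hd A) ?_
  have hcd : 0 < ENNReal.ofReal c ^ d :=
    ENNReal.rpow_pos (ENNReal.ofReal_pos.2 hf.ratio_pos) ENNReal.ofReal_ne_top
  have lower : μH[d] A ≤ (ENNReal.ofReal c ^ d)⁻¹ * μH[d] (f '' A) := by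
    have h := hf.antilipschitzWith.le_hausdorffMeasure_image hd A
    rwa [ENNReal.coe_inv (Real.toNNReal_pos.2 hf.ratio_pos).ne', ENNReal.inv_rpow] at h
  exact (ENNReal.mul_le_iff_le_inv hcd.ne' (by finiteness)).2 lower

end Metric

section Normed

variable {E : Type*} [NormedAddCommGroup E] [NormedSpace ℝ E] [FiniteDimensional ℝ E]
  {c : ℝ} {f : E → E}

theorem surjective [StrictConvexSpace ℝ E] (hf : IsSimilarity c f) : f.Surjective := by
  have rescaled_isometry : Isometry fun x ↦ c⁻¹ • f x := Isometry.of_dist_eq fun x y ↦ by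
    rw [dist_smul₀, hf.dist_eq, Real.norm_of_nonneg (inv_nonneg.2 hf.ratio_pos.le),
      inv_mul_cancel_left₀ hf.ratio_pos.ne']
  let : Inhabited E := ⟨0⟩
  let T := rescaled_isometry.affineIsometryOfStrictConvexSpace
  intro z
  obtain ⟨x, hx⟩ := (T.toAffineIsometryEquiv rfl).surjective (c⁻¹ • z)
  exact ⟨x, smul_right_injective E (inv_ne_zero hf.ratio_pos.ne') hx⟩

variable [MeasurableSpace E] [BorelSpace E]

theorem addHaar_image (hf : IsSimilarity c f) (μ : Measure E) [μ.IsAddHaarMeasure] (A : Set E) :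
    μ (f '' A) = ENNReal.ofReal (c ^ Module.finrank ℝ E) * μ A := by
  have haar_eq_smul_hausdorff := Measure.isAddLeftInvariant_eq_smul μ μH[Module.finrank ℝ E]
  rw [haar_eq_smul_hausdorff, Measure.smul_apply, Measure.smul_apply,
    hf.hausdorffMeasure_image (Nat.cast_nonneg _), ENNReal.rpow_natCast,
    ← ENNReal.ofReal_pow hf.ratio_pos.le, mul_smul_comm]

end Normed

end IsSimilarity

theorem cthickening_inter_closedBall_eq_of_subset {X : Type*} [PseudoMetricSpace X]
    {F G : Set X} {x : X} {ε ρ : ℝ} (hF : IsCompact F) (hε : 0 ≤ ε)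
    (hGF : G ⊆ F) (hFG : F ∩ closedBall x (ρ + ε) ⊆ G) :
    cthickening ε F ∩ closedBall x ρ = cthickening ε G ∩ closedBall x ρ := by
  refine Subset.antisymm ?_ (inter_subset_inter_left _ (cthickening_subset_of_subset ε hGF))
  rintro z ⟨hzF, hzx⟩
  rw [hF.cthickening_eq_biUnion_closedBall hε] at hzF
  obtain ⟨p, hp, hzp⟩ := mem_iUnion₂.1 hzF
  have hpx : dist p x ≤ ρ + ε := by
    linarith [dist_triangle_left p x z, mem_closedBall.1 hzp, mem_closedBall.1 hzx]
  exact ⟨closedBall_subset_cthickening (hFG ⟨hp, hpx⟩) ε hzp, hzx⟩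

theorem closedBall_subset_image_interior_of_lt_infDist {X Y : Type*} [TopologicalSpace X]
    [PseudoMetricSpace Y] {f : X → Y} (hf : IsHomeomorph f) {J : Set X} {y : Y} {ρ : ℝ}
    (hρ : ρ < infDist y (f '' J)ᶜ) : closedBall y ρ ⊆ f '' interior J := by
  rw [hf.image_interior]
  exact (closedBall_subset_ball hρ).trans
    (interior_maximal ball_infDist_compl_subset isOpen_ball)

theorem infDist_apply_le_of_mapsTo {X : Type*} [PseudoMetricSpace X] {f : X → X} {K : ℝ≥0}
    (hf : LipschitzWith K f) {A : Set X} (hA : MapsTo f A A) (x : X) :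
    infDist (f x) A ≤ K * infDist x A := by
  rcases A.eq_empty_or_nonempty with rfl | hne
  · simp
  have := hne.to_subtype
  rw [infDist_eq_iInf (x := x), Real.mul_iInf_of_nonneg K.coe_nonneg]
  exact le_ciInf fun u ↦ (infDist_le_dist_of_mem (hA u.2)).trans (hf.dist_le_mul x u)

-- A point of `F` farthest from `A` is the image under some `S i` of a point at least as far away.
theorem subset_of_subset_iUnion_image_of_contractingWith {ι X : Type*} [MetricSpace X]
    {S : ι → X → X} {K : ι → ℝ≥0} (hS : ∀ i, ContractingWith (K i) (S i)) {F A : Set X}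
    (hF : IsCompact F) (hF_sub : F ⊆ ⋃ i, S i '' F) (hA : IsClosed A)
    (hA_ne : A.Nonempty) (hA_maps : ∀ i, MapsTo (S i) A A) : F ⊆ A := by
  rcases F.eq_empty_or_nonempty with rfl | hF_ne
  · exact empty_subset A
  obtain ⟨p, hp, hp_max⟩ := hF.exists_isMaxOn hF_ne (continuous_infDist_pt A).continuousOn
  have hp_le : infDist p A ≤ 0 := by
    obtain ⟨i, q, hq, rfl⟩ := mem_iUnion.1 (hF_sub hp)
    have farthest : infDist q A ≤ infDist (S i q) A := hp_max hq
    have contracted := infDist_apply_le_of_mapsTo (hS i).toLipschitzWith (hA_maps i) q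
    have hK : (K i : ℝ) < 1 := (hS i).1
    nlinarith [infDist_nonneg (x := q) (s := A)]
  intro z hz
  rw [hA.mem_iff_infDist_zero hA_ne]
  exact le_antisymm ((hp_max hz).trans hp_le) infDist_nonneg

section Words

variable {ι X : Type*} {S : ι → X → X}

/-- The composition `S_w = S_{w₁} ∘ ⋯ ∘ S_{w_n}` of the maps `S i` along the word `w = w₁…w_n`,
the identity for the empty word. -/
def wordMap (S : ι → X → X) (w : List ι) : X → X :=
  w.foldr (fun i g => S i ∘ g) id

theorem wordMap_cons (i : ι) (w : List ι) : wordMap S (i :: w) = S i ∘ wordMap S w := rfl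

theorem mapsTo_wordMap {A : Set X} (hA : ∀ i, MapsTo (S i) A A) (w : List ι) :
    MapsTo (wordMap S w) A A := by
  induction w with
  | nil => exact mapsTo_id A
  | cons i w ih => exact (hA i).comp ih

theorem isSimilarity_wordMap [PseudoMetricSpace X] {r : ι → ℝ}
    (hS : ∀ i, IsSimilarity (r i) (S i)) (w : List ι) :
    IsSimilarity (w.map r).prod (wordMap S w) := by
  induction w with
  | nil => exact .id
  | cons i w ih =>
    rw [List.map_cons, List.prod_cons]
    exact (hS i).comp ih

end Words

section OpenSetCondition

variable {ι X : Type*} [TopologicalSpace X] {S : ι → X → X} {U F : Set X}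

/-- The family `S` satisfies the open set condition with feasible set `U`: a nonempty open set that
each `S i` maps into itself, with pairwise disjoint images. For a formulation with a regular closed
set `J`, take `U = interior J`. -/
structure OpenSetCondition (S : ι → X → X) (U : Set X) : Prop where
  isOpen : IsOpen U
  nonempty : U.Nonempty
  mapsTo : ∀ i, MapsTo (S i) U U
  disjoint_image : ∀ i j, i ≠ j → Disjoint (S i '' U) (S j '' U)

namespace OpenSetCondition

theorem inter_image_subset_image (hU : OpenSetCondition S U) (hS_cont : ∀ i, Continuous (S i))
    (hS_open : ∀ i, IsOpenMap (S i)) (hF : F ⊆ ⋃ i, S i '' F) (hFU : F ⊆ closure U) (i : ι) :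
    F ∩ S i '' U ⊆ S i '' F := by
  rintro p ⟨hpF, hpU⟩
  obtain ⟨j, q, hq, rfl⟩ := mem_iUnion.1 (hF hpF)
  rcases eq_or_ne i j with rfl | hij
  · exact mem_image_of_mem (S i) hq
  · have mem_closure : S j q ∈ closure (S j '' U) :=
      image_closure_subset_closure_image (hS_cont j) (mem_image_of_mem (S j) (hFU hq))
    have disjoint_closure : Disjoint (S i '' U) (closure (S j '' U)) :=
      (hU.disjoint_image i j hij).closure_right (hS_open i U hU.isOpen)
    exact (disjoint_closure.notMem_of_mem_left hpU mem_closure).elim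

theorem inter_wordMap_image_subset_image (hU : OpenSetCondition S U)
    (hS : ∀ i, IsOpenEmbedding (S i)) (hF : F ⊆ ⋃ i, S i '' F) (hFU : F ⊆ closure U) (w : List ι) :
    F ∩ wordMap S w '' U ⊆ wordMap S w '' F := by
  induction w with
  | nil => exact inter_subset_left.trans (image_id F).ge
  | cons i w ih =>
    rintro _ ⟨hpF, u, hu, rfl⟩
    obtain ⟨q, hq, hqu⟩ := hU.inter_image_subset_image (fun j ↦ (hS j).continuous)
      (fun j ↦ (hS j).isOpenMap) hF hFU i ⟨hpF, mem_image_of_mem _ (mapsTo_wordMap hU.mapsTo w hu)⟩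
    obtain rfl : q = wordMap S w u := (hS i).injective hqu
    rw [wordMap_cons, image_comp]
    exact mem_image_of_mem (S i) (ih ⟨hq, mem_image_of_mem _ hu⟩)

theorem of_interior {J : Set X} (hS : ∀ i, IsOpenMap (S i)) (hJ_ne : (interior J).Nonempty)
    (hJ : ∀ i, S i '' J ⊆ J)
    (hJ_disj : ∀ i j, i ≠ j → Disjoint (S i '' interior J) (S j '' interior J)) :
    OpenSetCondition S (interior J) where
  isOpen := isOpen_interior
  nonempty := hJ_ne
  mapsTo i := mapsTo_iff_image_subset.2 <|
    ((hS i).image_interior_subset J).trans (interior_mono (hJ i))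
  disjoint_image := hJ_disj

end OpenSetCondition

end OpenSetCondition

section SelfSimilar

variable {ι E : Type*} [NormedAddCommGroup E] [NormedSpace ℝ E] [FiniteDimensional ℝ E]
  [StrictConvexSpace ℝ E] {S : ι → E → E} {r : ι → ℝ} {F U : Set E}

theorem cthickening_inter_closedBall_eq_image_wordMap (hS : ∀ i, IsSimilarity (r i) (S i))
    (hr : ∀ i, r i < 1) (hF_cpt : IsCompact F) (hF_self : F = ⋃ i, S i '' F)
    (hU : OpenSetCondition S U) (w : List ι) {ε ρ : ℝ} (hε : 0 ≤ ε) {y : E}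
    (hball : closedBall (wordMap S w y) (ρ + ε) ⊆ wordMap S w '' U) :
    cthickening ε F ∩ closedBall (wordMap S w y) ρ =
      wordMap S w '' (cthickening ((w.map r).prod⁻¹ * ε) F ∩
        closedBall y ((w.map r).prod⁻¹ * ρ)) := by
  have homeo (i : ι) : IsHomeomorph (S i) := (hS i).isHomeomorph (hS i).surjective
  have contracting (i : ι) : ContractingWith (r i).toNNReal (S i) :=
    ⟨Real.toNNReal_lt_one.2 (hr i), (hS i).lipschitzWith⟩
  have hFU : F ⊆ closure U := subset_of_subset_iUnion_image_of_contractingWith contracting hF_cpt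
    hF_self.subset isClosed_closure hU.nonempty.closure
    fun i ↦ (hU.mapsTo i).closure (homeo i).continuous
  have hSF (i : ι) : MapsTo (S i) F F := fun z hz ↦
    hF_self.superset (mem_iUnion_of_mem i (mem_image_of_mem (S i) hz))
  have hw := isSimilarity_wordMap hS w
  have inter_ball_subset : F ∩ closedBall (wordMap S w y) (ρ + ε) ⊆ wordMap S w '' F :=
    (inter_subset_inter_right F hball).trans <| hU.inter_wordMap_image_subset_image
      (fun i ↦ (homeo i).isOpenEmbedding) hF_self.subset hFU w
  rw [cthickening_inter_closedBall_eq_of_subset hF_cpt hε (mapsTo_wordMap hSF w).image_subset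
      inter_ball_subset,
    ← hw.preimage_cthickening_image, ← hw.preimage_closedBall, ← preimage_inter,
    image_preimage_eq _ hw.surjective]

variable [MeasurableSpace E] [BorelSpace E] (μ : Measure E) [μ.IsAddHaarMeasure]

theorem statement12_general (hS : ∀ i, IsSimilarity (r i) (S i)) (hr : ∀ i, r i < 1)
    (hF_cpt : IsCompact F) (hF_self : F = ⋃ i, S i '' F) {J : Set E} (hJ_sub : ∀ i, S i '' J ⊆ J)
    (hJ_disj : ∀ i j, i ≠ j → Disjoint (S i '' interior J) (S j '' interior J))
    (w : List ι) {ε ρ : ℝ} (hε : 0 ≤ ε) (hρ : 0 ≤ ρ) {y : E}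
    (hsep : ρ + ε < infDist (wordMap S w y) (wordMap S w '' J)ᶜ) :
    μ (cthickening ε F ∩ closedBall (wordMap S w y) ρ) =
      ENNReal.ofReal ((w.map r).prod ^ Module.finrank ℝ E) *
        μ (cthickening ((w.map r).prod⁻¹ * ε) F ∩ closedBall y ((w.map r).prod⁻¹ * ρ)) := by
  have hw := isSimilarity_wordMap hS w
  have hball : closedBall (wordMap S w y) (ρ + ε) ⊆ wordMap S w '' interior J :=
    closedBall_subset_image_interior_of_lt_infDist (hw.isHomeomorph hw.surjective) hsep
  have interior_nonempty : (interior J).Nonempty :=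
    ((nonempty_closedBall.2 (add_nonneg hρ hε)).mono hball).of_image
  have isOpenMap (i : ι) : IsOpenMap (S i) := ((hS i).isHomeomorph (hS i).surjective).isOpenMap
  have osc : OpenSetCondition S (interior J) :=
    .of_interior isOpenMap interior_nonempty hJ_sub hJ_disj
  rw [cthickening_inter_closedBall_eq_image_wordMap hS hr hF_cpt hF_self osc w hε hball,
    hw.addHaar_image μ]

end SelfSimilar

/-- (Scaling of localized volume.) Under the open set condition for
`J`, if `w` is a finite word with composed similarity `S_w`, contraction ratio
`r_w = r_{w₁}⋯r_{w_n}`, `F_w = S_w(F)`, `J_w = S_w(J)`, `a ≥ 1`, `x ∈ F_w` and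
`ε > 0` with `2aε < d(x, ℝ^d ∖ J_w)`, then for the (unique) point `y` with
`S_w(y) = x` one has
`λ_d(F(ε) ∩ B(x,aε)) = r_w^d · λ_d(F(r_w⁻¹ε) ∩ B(y, a r_w⁻¹ ε))`. -/
theorem statement12 (d N : ℕ) (hd : 1 ≤ d) (hN : 2 ≤ N)
    (S : Fin N → EuclideanSpace ℝ (Fin d) → EuclideanSpace ℝ (Fin d))
    (r : Fin N → ℝ) (hr : ∀ i, r i ∈ Set.Ioo (0 : ℝ) 1)
    (hS : ∀ i x y, dist (S i x) (S i y) = r i * dist x y)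
    (F : Set (EuclideanSpace ℝ (Fin d)))
    (hF_ne : F.Nonempty) (hF_cpt : IsCompact F)
    (hF_self : F = ⋃ i, S i '' F)
    (J : Set (EuclideanSpace ℝ (Fin d))) (hJ_cpt : IsCompact J)
    (hJ_reg : J = closure (interior J))
    (hJ_sub : ∀ i, S i '' J ⊆ J)
    (hJ_disj : ∀ i j, i ≠ j → Disjoint (S i '' interior J) (S j '' interior J))
    (w : List (Fin N))
    (a ε : ℝ) (ha : 1 ≤ a) (hε : 0 < ε)
    (x : EuclideanSpace ℝ (Fin d))
    (hx : x ∈ (w.foldr (fun i g => S i ∘ g) id) '' F)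
    (hsep : 2 * a * ε < Metric.infDist x ((w.foldr (fun i g => S i ∘ g) id) '' J)ᶜ) :
    ∀ y : EuclideanSpace ℝ (Fin d), (w.foldr (fun i g => S i ∘ g) id) y = x →
      volume (Metric.cthickening ε F ∩ Metric.closedBall x (a * ε))
        = ENNReal.ofReal ((w.map r).prod ^ d) *
            volume (Metric.cthickening (((w.map r).prod)⁻¹ * ε) F
              ∩ Metric.closedBall y (a * (((w.map r).prod)⁻¹ * ε))) := by
  rintro y rfl
  have radii_lt : a * ε + ε < infDist (wordMap S w y) (wordMap S w '' J)ᶜ :=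
    lt_of_le_of_lt (by nlinarith) hsep
  simpa only [wordMap, finrank_euclideanSpace_fin, mul_left_comm] using
    statement12_general volume (fun i ↦ ⟨(hr i).1, hS i⟩) (fun i ↦ (hr i).2) hF_cpt hF_self
      hJ_sub hJ_disj w hε.le (by positivity) radii_lt
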